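/- Let $S \subseteq \mathbb{F}_2^m$ be a subspace, $\Delta \in \mathbb{F}_2^m \setminus S$, $x, z \in \mathbb{F}_2^m$, $\widehat{S} := (S_{\Delta})^{\perp}$, and $\widehat{\Delta} \in S^{\perp}$ with $\langle \Delta, \widehat{\Delta}\rangle = 1$. Let $U := X^x Z^z$ and let $\mathrm{Enc} : \mathbb{C}^2 \to \mathbb{C}^{\mathbb{F}_2^m}$ be the linear isometry with $\mathrm{Enc}\,|b\rangle = U\,|S + b\Delta\rangle$ for $b \in \{0,1\}$. For $\theta \in \{0,1\}$ and $f : \{0,1\} \to \{0,1\}$ define the projector $D_{\theta,f} := \sum_{b : f(b)=1} \Pi[S + b\Delta + x]$ if $\theta = 0$, and $D_{\theta,f} := \sum_{b : f(b)=1} \Pi[\widehat{S} + b\widehat{\Delta} + z]$ if $\theta = 1$. Then $\mathrm{Enc}^{\dagger}\,(H^{\otimes m})^{\theta}\, D_{\theta,f}\, (H^{\otimes m})^{\theta}\,\mathrm{Enc} \;=\; H_2^{\theta}\Big(\sum_{b : f(b)=1}|b\rangle\langle b|\Big)H_2^{\theta}$, where $H_2 = \tfrac{1}{\sqrt{2}}\begin{pmatrix}1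 & 1\\ 1 & -1\end{pmatrix}$ is the single-qubit Hadamard. -/

import Mathlib

open scoped Classical Matrix

noncomputable section

/-- The vector space `𝔽₂^m`. -/
abbrev Vec (m : ℕ) := Fin m → ZMod 2

/-- The bilinear form `⟨v,w⟩ = ∑ᵢ vᵢ wᵢ ∈ 𝔽₂`. -/
def bform {m : ℕ} (v w : Vec m) : ZMod 2 := ∑ i, v i * w i

/-- The sign `(-1)^{⟨v,w⟩} ∈ ℂ`. -/
def sgn {m : ℕ} (v w : Vec m) : ℂ := (-1 : ℂ) ^ (bform v w).val

/-- The Pauli-X unitary `X^x : |v⟩ ↦ |v + x⟩`, as a matrix. -/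
def Xop {m : ℕ} (x : Vec m) : Matrix (Vec m) (Vec m) ℂ :=
  Matrix.of fun a b => if a = b + x then 1 else 0

/-- The Pauli-Z unitary `Z^z : |v⟩ ↦ (-1)^{⟨z,v⟩} |v⟩`, as a matrix. -/
def Zop {m : ℕ} (z : Vec m) : Matrix (Vec m) (Vec m) ℂ :=
  Matrix.diagonal fun v => sgn z v

/-- The `m`-fold Hadamard transform, with entries `(H^{⊗m})_{w,v} = 2^{-m/2} (-1)^{⟨v,w⟩}`. -/
def Had (m : ℕ) : Matrix (Vec m) (Vec m) ℂ :=
  Matrix.of fun w v => (((Real.sqrt (2 ^ m))⁻¹ : ℝ) : ℂ) * sgn v w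

/-- The projector `Π[A] = ∑_{v ∈ A} |v⟩⟨v|`. -/
def proj {m : ℕ} (A : Set (Vec m)) : Matrix (Vec m) (Vec m) ℂ :=
  Matrix.of fun a b => if a = b ∧ a ∈ A then 1 else 0

/-- The normalized coset state `|A + t⟩ = |A|^{-1/2} ∑_{v ∈ A + t} |v⟩`, as a vector of
amplitudes. -/
def cosetState {m : ℕ} (A : Set (Vec m)) (t : Vec m) : Vec m → ℂ :=
  fun v => if v ∈ (· + t) '' A then (((Real.sqrt (Nat.card A))⁻¹ : ℝ) : ℂ) else 0

/-- The dual `A^⊥ = {w : ⟨v,w⟩ = 0 for all v ∈ A}`. -/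
def perp {m : ℕ} (A : Set (Vec m)) : Set (Vec m) := {w | ∀ v ∈ A, bform v w = 0}

/-- `S_Δ = S ∪ (S + Δ)`. -/
def SDelta {m : ℕ} (S : Submodule (ZMod 2) (Vec m)) (Δ : Vec m) : Set (Vec m) :=
  (S : Set (Vec m)) ∪ ((· + Δ) '' (S : Set (Vec m)))

/-- The rank-one projector `|ψ⟩⟨ψ|`. -/
def outer {m : ℕ} (ψ : Vec m → ℂ) : Matrix (Vec m) (Vec m) ℂ :=
  Matrix.of fun a b => ψ a * star (ψ b)

end

/-!
Conjugation by a Pauli operator only shifts the supports of the projectors, so for `θ = 0` the claim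
reduces to the orthonormality of the coset states `|S + bΔ⟩`. The Hadamard transform exchanges `X`
and `Z` up to a sign, and takes the coset code of `(S, Δ)` to the coset code of the dual pair
`(Ŝ, Δ̂)` precomposed with the one-qubit Hadamard gate. Hence the case `θ = 1` is the case `θ = 0`
for the dual code.
-/

section Sign

variable {m : ℕ}

lemma bform_comm (v w : Vec m) : bform v w = bform w v := dotProduct_comm v w

lemma bform_add_left (u v w : Vec m) : bform (u + v) w = bform u w + bform v w :=
  add_dotProduct u v w

lemma bform_smul_left (c : ZMod 2) (v w : Vec m) : bform (c • v) w = c * bform v w :=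
  smul_dotProduct c v w

lemma bform_add_right (u v w : Vec m) : bform u (v + w) = bform u v + bform u w :=
  dotProduct_add u v w

lemma bform_sub_right (u v w : Vec m) : bform u (v - w) = bform u v - bform u w :=
  dotProduct_sub u v w

lemma bform_smul_right (c : ZMod 2) (v w : Vec m) : bform v (c • w) = c * bform v w :=
  dotProduct_smul c v w

lemma sgn_comm (v w : Vec m) : sgn v w = sgn w v := by
  rw [sgn, bform_comm, sgn]

lemma sgn_add_left (u v w : Vec m) : sgn (u + v) w = sgn u w * sgn v w := by
  rw [sgn, bform_add_left]
  exact (AddChar.zmodChar 2 (neg_one_sq (R := ℂ))).map_add_eq_mul _ _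

lemma sgn_add_right (u v w : Vec m) : sgn u (v + w) = sgn u v * sgn u w := by
  rw [sgn_comm, sgn_add_left, sgn_comm v, sgn_comm w]

lemma star_sgn (v w : Vec m) : star (sgn v w) = sgn v w := by
  simp [sgn]

lemma sgn_mul_self (v w : Vec m) : sgn v w * sgn v w = 1 := by
  simp [sgn, ← mul_pow]

lemma zmod_two_eq_zero_or_eq_one (c : ZMod 2) : c = 0 ∨ c = 1 := by
  revert c
  decide

lemma sgn_eq_one_iff {v w : Vec m} : sgn v w = 1 ↔ bform v w = 0 := by
  rw [sgn]
  obtain h | h := zmod_two_eq_zero_or_eq_one (bform v w)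
  · simp [h]
  · norm_num [h, ZMod.val_one]

/-- The character `v ↦ (-1)^⟨v,w⟩` of `𝔽₂^m`. -/
def sgnChar (w : Vec m) : AddChar (Vec m) ℂ where
  toFun v := sgn v w
  map_zero_eq_one' := by simp [sgn, bform]
  map_add_eq_mul' u v := sgn_add_left u v w

lemma sum_sgn_submodule (S : Submodule (ZMod 2) (Vec m)) (w : Vec m) :
    ∑ s : S, sgn (s : Vec m) w = if w ∈ perp (S : Set (Vec m)) then (Nat.card S : ℂ) else 0 := by
  have htrivial : (sgnChar w).compAddMonoidHom S.subtype.toAddMonoidHom = 0 ↔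
      w ∈ perp (S : Set (Vec m)) := by
    simp [AddChar.eq_zero_iff, perp, sgnChar, sgn_eq_one_iff]
  rw [Nat.card_eq_fintype_card, ← if_congr htrivial rfl rfl, ← AddChar.sum_eq_ite]
  rfl

end Sign

section Dual

variable {m : ℕ}

/-- The dual `A^⊥` as a subspace. -/
def perpSubmodule (A : Set (Vec m)) : Submodule (ZMod 2) (Vec m) where
  carrier := perp A
  zero_mem' v _ := dotProduct_zero v
  add_mem' hu hw v hv := by rw [bform_add_right, hu v hv, hw v hv, add_zero]
  smul_mem' c w hw v hv := by rw [bform_smul_right, hw v hv, mul_zero]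

lemma mem_image_add_iff {G : Type*} [AddGroup G] {A : Set G} {v t : G} :
    v ∈ (· + t) '' A ↔ v - t ∈ A := by
  rw [Set.image_add_right, Set.mem_preimage, sub_eq_add_neg]

lemma natCard_mul_natCard_perp (S : Submodule (ZMod 2) (Vec m)) :
    Nat.card S * Nat.card (perp (S : Set (Vec m))) = 2 ^ m := by
  have hperp : perpSubmodule (S : Set (Vec m)) =
      S.dualAnnihilator.map (dotProductEquiv (ZMod 2) (Fin m)).symm.toLinearMap := by
    rw [← Submodule.comap_equiv_eq_map_symm]
    ext w
    simp only [Submodule.mem_comap, Submodule.mem_dualAnnihilator]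
    exact forall₂_congr fun v _ => by rw [bform_comm]; rfl
  have hrank : Module.finrank (ZMod 2) S +
      Module.finrank (ZMod 2) (perpSubmodule (S : Set (Vec m))) = m := by
    rw [hperp, LinearEquiv.finrank_map_eq, Subspace.finrank_add_finrank_dualAnnihilator_eq,
      Module.finrank_fin_fun]
  change Nat.card S * Nat.card (perpSubmodule (S : Set (Vec m))) = _
  rw [Module.natCard_eq_pow_finrank (K := ZMod 2) (V := S),
    Module.natCard_eq_pow_finrank (K := ZMod 2) (V := perpSubmodule (S : Set (Vec m))),
    ← pow_add, hrank, Nat.card_zmod]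

lemma natCard_SDelta {S : Submodule (ZMod 2) (Vec m)} {Δ : Vec m} (hΔ : Δ ∉ S) :
    Nat.card (SDelta S Δ) = 2 * Nat.card S := by
  have hdisj : Disjoint (S : Set (Vec m)) ((· + Δ) '' S) := by
    refine Set.disjoint_left.mpr fun v hv hvΔ => hΔ ?_
    exact (S.sub_mem_iff_right hv).mp (mem_image_add_iff.mp hvΔ)
  rw [SDelta, Nat.card_coe_set_eq, Set.ncard_union_eq hdisj,
    Set.ncard_image_of_injective _ (add_left_injective Δ), two_mul]
  rfl

lemma mem_perp_SDelta_iff {S : Submodule (ZMod 2) (Vec m)} {Δ w : Vec m} :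
    w ∈ perp (SDelta S Δ) ↔ w ∈ perp (S : Set (Vec m)) ∧ bform Δ w = 0 := by
  refine ⟨fun h => ⟨fun v hv => h v (Or.inl hv), h Δ (Or.inr ⟨0, S.zero_mem, zero_add Δ⟩)⟩, ?_⟩
  rintro ⟨hS, hwΔ⟩ v (hv | ⟨s, hs, rfl⟩)
  · exact hS v hv
  · rw [bform_add_left, hS s hs, hwΔ, add_zero]

lemma mem_perp_SDelta_add_smul_iff {S : Submodule (ZMod 2) (Vec m)} {Δ Δhat w : Vec m}
    (hΔhat : Δhat ∈ perp (S : Set (Vec m))) (hpair : bform Δ Δhat = 1) (c : ZMod 2) :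
    w ∈ (· + c • Δhat) '' perp (SDelta S Δ) ↔
      w ∈ perp (S : Set (Vec m)) ∧ bform Δ w = c := by
  have hmem : c • Δhat ∈ perpSubmodule (S : Set (Vec m)) := Submodule.smul_mem _ c hΔhat
  have hform : bform Δ (w - c • Δhat) = bform Δ w - c := by
    rw [bform_sub_right, bform_smul_right, hpair, mul_one]
  rw [mem_image_add_iff, mem_perp_SDelta_iff, hform, sub_eq_zero]
  exact and_congr_left' ((perpSubmodule (S : Set (Vec m))).sub_mem_iff_left hmem)

lemma SDelta_perpSubmodule_SDelta {S : Submodule (ZMod 2) (Vec m)} {Δ Δhat : Vec m}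
    (hΔhat : Δhat ∈ perp (S : Set (Vec m))) (hpair : bform Δ Δhat = 1) :
    SDelta (perpSubmodule (SDelta S Δ)) Δhat = perp (S : Set (Vec m)) := by
  ext w
  have hcoset := mem_perp_SDelta_add_smul_iff (w := w) hΔhat hpair 1
  rw [one_smul] at hcoset
  change w ∈ perp (SDelta S Δ) ∨ w ∈ (· + Δhat) '' perp (SDelta S Δ) ↔ _
  rw [mem_perp_SDelta_iff, hcoset, ← and_or_left]
  exact and_iff_left (zmod_two_eq_zero_or_eq_one _)

lemma notMem_perpSubmodule_SDelta {S : Submodule (ZMod 2) (Vec m)} {Δ Δhat : Vec m}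
    (hpair : bform Δ Δhat = 1) : Δhat ∉ perpSubmodule (SDelta S Δ) := fun h =>
  zero_ne_one ((mem_perp_SDelta_iff.mp h).2.symm.trans hpair)

end Dual

section Pauli

variable {m : ℕ}

lemma proj_eq_diagonal (A : Set (Vec m)) :
    proj A = Matrix.diagonal fun v => if v ∈ A then (1 : ℂ) else 0 := by
  ext v w
  by_cases h : v = w <;> simp [proj, h]

lemma Xop_conj_proj (x : Vec m) (A : Set (Vec m)) :
    (Xop x)ᴴ * proj ((· + x) '' A) * Xop x = proj A := by
  ext v w
  obtain rfl | h := eq_or_ne v w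
  · simp [proj_eq_diagonal, Matrix.mul_apply, Matrix.diagonal_apply, Xop, Set.image_add_right]
  · simp [proj_eq_diagonal, Matrix.mul_apply, Matrix.diagonal_apply, Xop, Set.image_add_right,
      h, h.symm]

lemma Zop_conj_proj (z : Vec m) (A : Set (Vec m)) : (Zop z)ᴴ * proj A * Zop z = proj A := by
  simp only [proj_eq_diagonal, Zop, Matrix.diagonal_conjTranspose, Matrix.diagonal_mul_diagonal]
  congr 1
  ext v
  rw [mul_right_comm, Pi.star_apply, star_sgn, sgn_mul_self, one_mul]

lemma Had_mul_Xop_mul_Zop (x z : Vec m) :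
    Had m * (Xop x * Zop z) = sgn x z • (Xop z * Zop x * Had m) := by
  ext w v
  have hX (u : Vec m) : w = u + z ↔ u = w - z := by rw [eq_sub_iff_add_eq, eq_comm]
  have hleft : (Had m * (Xop x * Zop z)) w v = Had m w (v + x) * sgn z v := by
    rw [← Matrix.mul_assoc, Zop, Matrix.mul_diagonal]
    simp [Matrix.mul_apply, Xop]
  have hright : (Xop z * Zop x * Had m) w v = sgn x (w + z) * Had m (w + z) v := by
    rw [Matrix.mul_assoc, Zop, ← ZModModule.sub_eq_add]
    simp [Matrix.mul_apply, Matrix.diagonal_apply, Xop, hX]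
  rw [hleft, Matrix.smul_apply, hright, Had, Matrix.of_apply, Matrix.of_apply, smul_eq_mul]
  simp only [sgn_add_left, sgn_add_right, sgn_comm z v]
  linear_combination -((((Real.sqrt (2 ^ m))⁻¹ : ℝ) : ℂ) * sgn x w * sgn v w * sgn v z)
    * sgn_mul_self x z

lemma Had_conjTranspose : (Had m)ᴴ = Had m := by
  ext v w
  rw [Matrix.conjTranspose_apply, Had, Matrix.of_apply, Matrix.of_apply, star_mul', star_sgn,
    sgn_comm, Complex.star_def, Complex.conj_ofReal]

end Pauli

section CosetState

variable {m : ℕ}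

lemma dotProduct_cosetState (S : Submodule (ZMod 2) (Vec m)) (t : Vec m) (g : Vec m → ℂ) :
    g ⬝ᵥ cosetState (S : Set (Vec m)) t =
      (((Real.sqrt (Nat.card S))⁻¹ : ℝ) : ℂ) * ∑ s : S, g (s + t) := by
  have hshift (v : Vec m) : cosetState (S : Set (Vec m)) t (v + t) =
      if v ∈ S then (((Real.sqrt (Nat.card S))⁻¹ : ℝ) : ℂ) else 0 := by
    simp only [cosetState, mem_image_add_iff, add_sub_cancel_right, SetLike.mem_coe]
    rfl
  rw [dotProduct, ← Equiv.sum_comp (Equiv.addRight t)]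
  simp only [Equiv.coe_addRight, hshift, mul_ite, mul_zero]
  rw [← Finset.sum_filter, Finset.sum_subtype (p := (· ∈ S)) _ (by simp), ← Finset.sum_mul,
    mul_comm]

lemma star_cosetState_dotProduct_cosetState (S : Submodule (ZMod 2) (Vec m)) (s t : Vec m) :
    star (cosetState (S : Set (Vec m)) s) ⬝ᵥ cosetState (S : Set (Vec m)) t =
      if t - s ∈ S then 1 else 0 := by
  have hmem (r : S) : (r : Vec m) + t - s ∈ S ↔ t - s ∈ S := by
    rw [add_sub_assoc]
    exact S.add_mem_iff_right r.2
  have hnorm : (((Real.sqrt (Nat.card S))⁻¹ : ℝ) : ℂ) *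
      ((Nat.card S : ℂ) * (((Real.sqrt (Nat.card S))⁻¹ : ℝ) : ℂ)) = 1 := by
    have hpos : (0 : ℝ) < Nat.card S := by exact_mod_cast Nat.card_pos
    norm_cast
    field_simp
    rw [Real.sq_sqrt hpos.le]
  rw [dotProduct_cosetState]
  simp only [Pi.star_apply, cosetState, mem_image_add_iff, SetLike.mem_coe, hmem]
  split_ifs
  · simpa using hnorm
  · simp

lemma proj_mulVec_cosetState (S : Submodule (ZMod 2) (Vec m)) (s t : Vec m) :
    (proj ((· + s) '' (S : Set (Vec m)))).mulVec (cosetState (S : Set (Vec m)) t) =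
      if t - s ∈ S then cosetState (S : Set (Vec m)) t else 0 := by
  have hmem {v : Vec m} (hv : v - t ∈ S) : v - s ∈ S ↔ t - s ∈ S := by
    rw [← sub_add_sub_cancel v t s]
    exact S.add_mem_iff_right hv
  ext v
  rw [proj_eq_diagonal, Matrix.mulVec_diagonal]
  simp only [cosetState, mem_image_add_iff, SetLike.mem_coe, ite_apply, Pi.zero_apply]
  by_cases hv : v - t ∈ S
  · simp only [hmem hv, ite_mul, one_mul, zero_mul]
  · simp only [hv, if_false, mul_zero, ite_self]

lemma Had_mulVec_cosetState (S : Submodule (ZMod 2) (Vec m)) (t w : Vec m) :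
    (Had m).mulVec (cosetState (S : Set (Vec m)) t) w =
      if w ∈ perp (S : Set (Vec m)) then
        (((Real.sqrt (Nat.card (perp (S : Set (Vec m)))))⁻¹ : ℝ) : ℂ) * sgn t w
      else 0 := by
  have hscalar : (Real.sqrt (Nat.card S))⁻¹ * (Real.sqrt (2 ^ m))⁻¹ * Nat.card S =
      (Real.sqrt (Nat.card (perp (S : Set (Vec m)))))⁻¹ := by
    have hcard : (2 : ℝ) ^ m = Nat.card S * Nat.card (perp (S : Set (Vec m))) := by
      exact_mod_cast (natCard_mul_natCard_perp S).symm
    have hpos : (0 : ℝ) < Nat.card S := by exact_mod_cast Nat.card_pos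
    rw [hcard, Real.sqrt_mul hpos.le, mul_inv]
    field_simp
    rw [Real.sq_sqrt hpos.le]
  rw [Matrix.mulVec, dotProduct_cosetState]
  simp only [Had, Matrix.of_apply, sgn_add_left, ← Finset.mul_sum, ← Finset.sum_mul,
    sum_sgn_submodule]
  split_ifs
  · rw [← hscalar]
    push_cast
    ring
  · simp

end CosetState

section Encoder

variable {m : ℕ} {ι : Type*}

/-- The coset code: the matrix with columns `|S + t i⟩`, for a family `t` of shifts. -/
noncomputable def cosetEncoder (S : Submodule (ZMod 2) (Vec m)) (t : ι → Vec m) :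
    Matrix (Vec m) ι ℂ :=
  Matrix.of fun v i => cosetState (S : Set (Vec m)) (t i) v

/-- The authentication code `|i⟩ ↦ X^x Z^z |S + t i⟩` with Pauli key `(x, z)`. -/
noncomputable def authEncoder (S : Submodule (ZMod 2) (Vec m)) (t : ι → Vec m) (x z : Vec m) :
    Matrix (Vec m) ι ℂ :=
  Xop x * Zop z * cosetEncoder S t

variable [DecidableEq ι] {S : Submodule (ZMod 2) (Vec m)} {t : ι → Vec m}

lemma cosetEncoder_conj_proj (ht : ∀ i j, t i - t j ∈ S → i = j) (b : ι) :
    (cosetEncoder S t)ᴴ * proj ((· + t b) '' (S : Set (Vec m))) * cosetEncoder S t =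
      Matrix.diagonal (Pi.single b (1 : ℂ)) := by
  have hmem (i j : ι) : t i - t j ∈ S ↔ i = j :=
    ⟨ht i j, fun h => by rw [h, sub_self]; exact S.zero_mem⟩
  ext i j
  calc ((cosetEncoder S t)ᴴ * proj ((· + t b) '' (S : Set (Vec m))) * cosetEncoder S t) i j
      = star (cosetState (S : Set (Vec m)) (t i)) ⬝ᵥ
          (proj ((· + t b) '' (S : Set (Vec m)))).mulVec
            (cosetState (S : Set (Vec m)) (t j)) := by
        rw [Matrix.mul_assoc]
        rfl
    _ = Matrix.diagonal (Pi.single b (1 : ℂ)) i j := by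
        simp only [proj_mulVec_cosetState, hmem, Matrix.diagonal_apply, Pi.single_apply]
        split_ifs <;> simp_all [star_cosetState_dotProduct_cosetState, eq_comm]

lemma authEncoder_conj_proj (ht : ∀ i j, t i - t j ∈ S → i = j) (x z : Vec m) (b : ι) :
    (authEncoder S t x z)ᴴ * proj ((· + (t b + x)) '' (S : Set (Vec m))) * authEncoder S t x z =
      Matrix.diagonal (Pi.single b (1 : ℂ)) := by
  have hshift : (· + (t b + x)) '' (S : Set (Vec m)) =
      (· + x) '' ((· + t b) '' (S : Set (Vec m))) := by
    simp only [Set.image_image, add_assoc]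
  calc _ = (cosetEncoder S t)ᴴ * ((Zop z)ᴴ * ((Xop x)ᴴ *
          proj ((· + x) '' ((· + t b) '' (S : Set (Vec m)))) * Xop x) * Zop z) *
            cosetEncoder S t := by
        simp only [authEncoder, hshift, Matrix.conjTranspose_mul, Matrix.mul_assoc]
    _ = _ := by rw [Xop_conj_proj, Zop_conj_proj, cosetEncoder_conj_proj ht]

lemma authEncoder_conj_sum_proj [Fintype ι] (ht : ∀ i j, t i - t j ∈ S → i = j) (x z : Vec m)
    (P : ι → Prop) [DecidablePred P] :
    (authEncoder S t x z)ᴴ *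
        (∑ b ∈ Finset.univ.filter P, proj ((· + (t b + x)) '' (S : Set (Vec m)))) *
        authEncoder S t x z =
      Matrix.diagonal fun b => if P b then (1 : ℂ) else 0 := by
  simp only [Matrix.mul_sum, Matrix.sum_mul, authEncoder_conj_proj ht]
  ext i j
  simp [Matrix.sum_apply, Matrix.diagonal_apply, Pi.single_apply]

end Encoder

section Qubit

variable {m : ℕ}

/-- The shifts `b ↦ bΔ` labelling the two cosets of a one-qubit coset code. -/
def bitShift (Δ : Vec m) (b : Fin 2) : Vec m := (b.val : ZMod 2) • Δ

/-- The one-qubit Hadamard gate. -/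
noncomputable def qubitHad : Matrix (Fin 2) (Fin 2) ℂ :=
  Matrix.of fun i j => (((Real.sqrt 2)⁻¹ : ℝ) : ℂ) * (-1 : ℂ) ^ (i.val * j.val)

lemma qubitHad_conjTranspose : qubitHadᴴ = qubitHad := by
  ext i j
  simp [qubitHad, mul_comm]

lemma eq_of_bitShift_sub_mem {S : Submodule (ZMod 2) (Vec m)} {Δ : Vec m} (hΔ : Δ ∉ S)
    (i j : Fin 2) (hij : bitShift Δ i - bitShift Δ j ∈ S) : i = j := by
  fin_cases i <;> fin_cases j <;> simp_all [bitShift]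

variable {S : Submodule (ZMod 2) (Vec m)} {Δ Δhat : Vec m}

lemma Had_mul_cosetEncoder (hΔhat : Δhat ∈ perp (S : Set (Vec m))) (hpair : bform Δ Δhat = 1) :
    Had m * cosetEncoder S (bitShift Δ) =
      cosetEncoder (perpSubmodule (SDelta S Δ)) (bitShift Δhat) * qubitHad := by
  have hscalar : (Real.sqrt (Nat.card (perp (S : Set (Vec m)))))⁻¹ =
      (Real.sqrt (Nat.card (perp (SDelta S Δ))))⁻¹ * (Real.sqrt 2)⁻¹ := by
    have hcard : Nat.card (perp (S : Set (Vec m))) = 2 * Nat.card (perp (SDelta S Δ)) := by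
      rw [← SDelta_perpSubmodule_SDelta hΔhat hpair,
        natCard_SDelta (notMem_perpSubmodule_SDelta hpair)]
      rfl
    rw [hcard, Nat.cast_mul, Nat.cast_ofNat, Real.sqrt_mul zero_le_two, mul_inv, mul_comm]
  have hcoset (c : Fin 2) (w : Vec m) :
      cosetState (perpSubmodule (SDelta S Δ) : Set (Vec m)) (bitShift Δhat c) w =
        if w ∈ perp (S : Set (Vec m)) ∧ bform Δ w = (c.val : ZMod 2) then
          (((Real.sqrt (Nat.card (perp (SDelta S Δ))))⁻¹ : ℝ) : ℂ) else 0 :=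
    if_congr (mem_perp_SDelta_add_smul_iff hΔhat hpair _) rfl rfl
  ext w b
  have hsgn : sgn (bitShift Δ b) w = (-1) ^ ((bform Δ w).val * b.val) := by
    rw [sgn, bitShift, bform_smul_left]
    fin_cases b <;> simp
  have hleft : (Had m * cosetEncoder S (bitShift Δ)) w b =
      (Had m).mulVec (cosetState (S : Set (Vec m)) (bitShift Δ b)) w := rfl
  rw [hleft, Had_mulVec_cosetState, hscalar, Matrix.mul_apply, Fin.sum_univ_two]
  simp only [cosetEncoder, Matrix.of_apply]
  rw [hcoset, hcoset, hsgn]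
  by_cases hw : w ∈ perp (S : Set (Vec m))
  · obtain h | h := zmod_two_eq_zero_or_eq_one (bform Δ w)
    · simp [hw, h, qubitHad]
    · simp [hw, h, qubitHad, ZMod.val_one, mul_assoc]
  · simp [hw]

lemma Had_mul_authEncoder (hΔhat : Δhat ∈ perp (S : Set (Vec m))) (hpair : bform Δ Δhat = 1)
    (x z : Vec m) :
    Had m * authEncoder S (bitShift Δ) x z =
      sgn x z • (authEncoder (perpSubmodule (SDelta S Δ)) (bitShift Δhat) z x * qubitHad) := by
  rw [authEncoder, ← Matrix.mul_assoc, Had_mul_Xop_mul_Zop, Matrix.smul_mul, Matrix.mul_assoc,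
    Had_mul_cosetEncoder hΔhat hpair, ← Matrix.mul_assoc, authEncoder]

lemma authEncoder_conj_Had_conj (hΔhat : Δhat ∈ perp (S : Set (Vec m)))
    (hpair : bform Δ Δhat = 1) (x z : Vec m) (D : Matrix (Vec m) (Vec m) ℂ) :
    (authEncoder S (bitShift Δ) x z)ᴴ * Had m * D * Had m * authEncoder S (bitShift Δ) x z =
      qubitHad *
        ((authEncoder (perpSubmodule (SDelta S Δ)) (bitShift Δhat) z x)ᴴ * D *
          authEncoder (perpSubmodule (SDelta S Δ)) (bitShift Δhat) z x) * qubitHad := by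
  calc _ = (Had m * authEncoder S (bitShift Δ) x z)ᴴ * D *
        (Had m * authEncoder S (bitShift Δ) x z) := by
        rw [Matrix.conjTranspose_mul, Had_conjTranspose, Matrix.mul_assoc _ (Had m)]
    _ = (sgn x z * sgn x z) • _ := by
        rw [Had_mul_authEncoder hΔhat hpair, Matrix.conjTranspose_smul, star_sgn,
          Matrix.conjTranspose_mul, qubitHad_conjTranspose, Matrix.smul_mul, Matrix.smul_mul,
          Matrix.mul_smul, smul_smul]
    _ = _ := by
        rw [sgn_mul_self, one_smul]
        simp only [Matrix.mul_assoc]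

end Qubit

/-- **Single-qubit coset-state authentication correctness.** Decoding an encoded qubit with
the classical decoder (applied coherently in basis `θ`) implements exactly the logical ZX
measurement `M[θ, f] = H₂^θ (∑_{b : f(b)=1} |b⟩⟨b|) H₂^θ` on the underlying qubit:
`Enc† (H^{⊗m})^θ D_{θ,f} (H^{⊗m})^θ Enc = H₂^θ (∑_{b : f(b)=1} |b⟩⟨b|) H₂^θ`. -/
theorem csa_decoding_correctness {m : ℕ} (hm : 1 ≤ m)
    (S : Submodule (ZMod 2) (Vec m)) (Δ : Vec m) (hΔ : Δ ∉ S) (x z : Vec m)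
    (Δhat : Vec m) (hΔhat : Δhat ∈ perp (S : Set (Vec m))) (hpair : bform Δ Δhat = 1)
    (θ : Fin 2) (f : Fin 2 → Fin 2)
    (U : Matrix (Vec m) (Vec m) ℂ) (hU : U = Xop x * Zop z)
    (Enc : Matrix (Vec m) (Fin 2) ℂ)
    (hEnc : ∀ v b, Enc v b = U.mulVec (cosetState (S : Set (Vec m)) ((b.val : ZMod 2) • Δ)) v)
    (D : Matrix (Vec m) (Vec m) ℂ)
    (hD : D = if θ = 0 then
        ∑ b ∈ Finset.univ.filter (fun b : Fin 2 => f b = 1),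
          proj ((· + ((b.val : ZMod 2) • Δ + x)) '' (S : Set (Vec m)))
      else
        ∑ b ∈ Finset.univ.filter (fun b : Fin 2 => f b = 1),
          proj ((· + ((b.val : ZMod 2) • Δhat + z)) '' perp (SDelta S Δ)))
    (H2 : Matrix (Fin 2) (Fin 2) ℂ)
    (hH2 : ∀ i j : Fin 2, H2 i j = (((Real.sqrt 2)⁻¹ : ℝ) : ℂ) * (-1 : ℂ) ^ (i.val * j.val)) :
    Encᴴ * (Had m) ^ θ.val * D * (Had m) ^ θ.val * Enc
      = H2 ^ θ.val * Matrix.diagonal (fun b : Fin 2 => if f b = 1 then (1 : ℂ) else 0)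
          * H2 ^ θ.val := by
  have hEncoder : Enc = authEncoder S (bitShift Δ) x z := by
    ext v b
    rw [hEnc, hU]
    rfl
  have hGate : H2 = qubitHad := Matrix.ext hH2
  subst hEncoder hGate hD
  obtain rfl | rfl : θ = 0 ∨ θ = 1 := by omega
  · simpa using! authEncoder_conj_sum_proj (eq_of_bitShift_sub_mem hΔ) x z (fun b => f b = 1)
  · have hdecode := authEncoder_conj_sum_proj
      (eq_of_bitShift_sub_mem (notMem_perpSubmodule_SDelta (S := S) hpair)) z x (fun b => f b = 1)
    rw [Fin.val_one, pow_one, pow_one, authEncoder_conj_Had_conj hΔhat hpair]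
    exact congrArg (qubitHad * · * qubitHad) hdecode
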